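/- Let k ≥ 2 and n_1, …, n_k be positive integers. If n_i = 1 for some i ∈ {1, …, k}, then the minus domination number of the complete k-partite graph K_{n_1,…,n_k} equals 1; otherwise (i.e., if n_i ≥ 2 for all i) it equals 2. -/

import Mathlib

open scoped Classical

/-- The minus domination number of a finite simple graph `G`: the minimum weight of a
function `f : V → {−1, 0, 1}` such that `f(N[v]) ≥ 1` for every vertex `v`. -/
noncomputable def minusDomNum {V : Type*} [Fintype V] (G : SimpleGraph V) : ℤ :=
  sInf {w : ℤ | ∃ f : V → ℤ, (∀ v, f v = -1 ∨ f v = 0 ∨ f v = 1) ∧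
    (∀ v, 1 ≤ f v + ∑ u ∈ G.neighborFinset v, f u) ∧ w = ∑ v, f v}

open SimpleGraph

section MinusDomination

variable {ι : Type*} [Fintype ι] {V : ι → Type*} [∀ i, Fintype (V i)]

/-- In a complete multipartite graph, the neighbours of `v` are the vertices outside its part. -/
theorem sum_neighborFinset_completeMultipartiteGraph (f : (Σ i, V i) → ℤ) (v : Σ i, V i)
    [Fintype ((completeMultipartiteGraph V).neighborSet v)] :
    ∑ u ∈ (completeMultipartiteGraph V).neighborFinset v, f u =
      ∑ u, f u - ∑ a, f ⟨v.1, a⟩ := by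
  have hnbr : (completeMultipartiteGraph V).neighborFinset v =
      Finset.univ.filter fun u : Σ i, V i => v.1 ≠ u.1 := by
    ext u
    simp
  have hpart : ∀ i, ∑ a : V i, (if v.1 ≠ i then f ⟨i, a⟩ else 0) =
      ∑ a, f ⟨i, a⟩ - if v.1 = i then ∑ a, f ⟨i, a⟩ else 0 := by
    intro i
    by_cases h : v.1 = i <;> simp [h]
  rw [hnbr, Finset.sum_filter, Fintype.sum_sigma, Fintype.sum_sigma]
  simp only [hpart, Finset.sum_sub_distrib, Finset.sum_ite_eq, Finset.mem_univ, if_true]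

/-- If every part has at least two vertices, then every function with `f(N[v]) ≥ 1` for all `v`
has weight at least `2`. -/
theorem two_le_sum_of_dominating [Nonempty ι] (hV : ∀ i, 2 ≤ Fintype.card (V i))
    (f : (Σ i, V i) → ℤ)
    (hf : ∀ v : Σ i, V i, 1 ≤ f v + (∑ u, f u - ∑ a, f ⟨v.1, a⟩)) :
    2 ≤ ∑ v, f v := by
  by_contra! hW
  set W := ∑ v, f v
  let S : ι → ℤ := fun i => ∑ a, f ⟨i, a⟩
  have hsum : W = ∑ i, S i := Fintype.sum_sigma f
  have hcard : ∀ i, (2 : ℤ) ≤ Fintype.card (V i) := fun i => by exact_mod_cast hV i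
  have hS : ∀ i, (Fintype.card (V i) : ℤ) * (S i + 1 - W) ≤ S i := by
    intro i
    have h : ∑ _a : V i, (S i + 1 - W) ≤ ∑ a, f ⟨i, a⟩ :=
      Finset.sum_le_sum fun a _ => by
        have := hf ⟨i, a⟩
        simp only [S]
        linarith
    rwa [Finset.sum_const, Finset.card_univ, nsmul_eq_mul] at h
  have hS_nonpos : ∀ i, S i ≤ 0 := fun i => by
    by_contra! h
    nlinarith [hS i, hcard i]
  have hW_nonpos : W ≤ 0 := hsum ▸ Finset.sum_nonpos fun i _ => hS_nonpos i
  obtain ⟨i⟩ := ‹Nonempty ι›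
  have hWi : W ≤ S i := by
    rw [hsum, ← Finset.add_sum_erase _ S (Finset.mem_univ i)]
    linarith [Finset.sum_nonpos fun j (_ : j ∈ Finset.univ.erase i) => hS_nonpos j]
  nlinarith [hS i, hcard i]

end MinusDomination

/-- The minus domination number is `m` as soon as `m` is an attained lower bound. -/
theorem minusDomNum_eq_of_isLeast {V : Type*} [Fintype V] (G : SimpleGraph V) (m : ℤ)
    (f : V → ℤ) (hf : ∀ v, f v = -1 ∨ f v = 0 ∨ f v = 1)
    (hdom : ∀ v, 1 ≤ f v + ∑ u ∈ G.neighborFinset v, f u) (hm : ∑ v, f v = m)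
    (hle : ∀ g : V → ℤ, (∀ v, 1 ≤ g v + ∑ u ∈ G.neighborFinset v, g u) → m ≤ ∑ v, g v) :
    minusDomNum G = m :=
  IsLeast.csInf_eq ⟨⟨f, hf, hdom, hm.symm⟩, by
    rintro w ⟨g, -, hg, rfl⟩
    exact hle g hg⟩

theorem minusDomNum_completeMultipartite
    (k : ℕ) (hk : 2 ≤ k) (n : Fin k → ℕ) (hn : ∀ i, 0 < n i) :
    ((∃ i, n i = 1) →
      minusDomNum (SimpleGraph.completeMultipartiteGraph fun i : Fin k => Fin (n i)) = 1) ∧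
    ((∀ i, n i ≠ 1) →
      minusDomNum (SimpleGraph.completeMultipartiteGraph fun i : Fin k => Fin (n i)) = 2) := by
  constructor
  · rintro ⟨i, hi⟩
    have huniq : Unique (Fin (n i)) := hi ▸ (inferInstance : Unique (Fin 1))
    have hpart : ∀ g : (Σ i, Fin (n i)) → ℤ, ∑ a, g ⟨i, a⟩ = g ⟨i, default⟩ := fun g =>
      Fintype.sum_unique _
    have hsum : ∑ v : Σ j, Fin (n j), (if v.1 = i then (1 : ℤ) else 0) = 1 := by
      rw [Fintype.sum_sigma, Fintype.sum_eq_single i fun j hj => by simp [hj]]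
      simp
    refine minusDomNum_eq_of_isLeast _ 1 (fun v => if v.1 = i then 1 else 0) (fun v => ?_)
      (fun v => ?_) hsum fun g hg => ?_
    · by_cases h : v.1 = i <;> simp [h]
    · rw [sum_neighborFinset_completeMultipartiteGraph, hsum]
      by_cases h : v.1 = i <;> simp [h, hi]
    · have := hg ⟨i, default⟩
      rw [sum_neighborFinset_completeMultipartiteGraph, hpart] at this
      linarith
  · intro h1
    have hcard : ∀ i, 2 ≤ n i := fun i => by
      have := hn i
      have := h1 i
      omega
    let p : Fin k := ⟨0, by omega⟩
    let q : Fin k := ⟨1, by omega⟩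
    have hpq : p ≠ q := by simp [p, q]
    have : Nonempty (Fin k) := ⟨p⟩
    let f : (Σ i, Fin (n i)) → ℤ := fun v =>
      if v.2 = ⟨0, hn v.1⟩ then (if v.1 = p then 1 else 0) + (if v.1 = q then 1 else 0) else 0
    have hpart : ∀ i, ∑ a, f ⟨i, a⟩ = (if i = p then 1 else 0) + (if i = q then 1 else 0) := by
      intro i
      rw [Fintype.sum_eq_single ⟨0, hn i⟩ fun a ha => by simp [f, ha]]
      simp [f]
    have hsum : ∑ v, f v = 2 := by
      rw [Fintype.sum_sigma]
      simp [hpart, Finset.sum_add_distrib]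
    refine minusDomNum_eq_of_isLeast _ 2 f (fun v => ?_) (fun v => ?_) hsum fun g hg => ?_
    · simp only [f]
      grind
    · rw [sum_neighborFinset_completeMultipartiteGraph, hsum, hpart]
      simp only [f]
      grind
    · simp only [sum_neighborFinset_completeMultipartiteGraph] at hg
      exact two_le_sum_of_dominating (by simpa using hcard) g hg
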